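/- Let (L, w)/(F, v) be a finite Galois extension of valued fields, K a decomposition subfield w.r.t. the prolongation w, with coset representatives τ₁ = 1, τ₂, …, τ_r of Gal(L/K) in Gal(L/F), giving the distinct prolongations wᵢ = w ∘ τᵢ of v to L. Then there exists y ∈ K with y ∈ (1 + M_w) ∩ ⋂_{i=2}^{r} M_{w∘τᵢ}. -/

import Mathlib

open Polynomial in
theorem aux_int {L : Type*} [Field L] (V : ValuationSubring L) {z : L} (hz : z ∈ V) (P : ℤ[X]) :
    aeval z P ∈ V := by
  have := (aeval (R := ℤ) (⟨z, hz⟩ : V) P).2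
  have h2 : ((aeval (R := ℤ) (⟨z, hz⟩ : V) P : V) : L) = aeval z P := by
    rw [aeval_def, aeval_def]
    change V.subtype _ = _
    rw [hom_eval₂]
    congr 1
  rwa [h2] at this

theorem aux_lt {L : Type*} [Field L] (V : ValuationSubring L) (x : L) :
    V.valuation x < 1 ↔ x = 0 ∨ x⁻¹ ∉ V := by
  by_cases h : x = 0
  · simp [h]
  · have hx : V.valuation x ≠ 0 := by simpa using h
    rw [← ValuationSubring.valuation_le_one_iff, map_inv₀, not_le,
      one_lt_inv₀ (zero_lt_iff.2 hx)]
    simp [h]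

theorem aux_comap {L : Type*} [Field L] (W : ValuationSubring L) (f : L →+* L) (x : L) :
    (W.comap f).valuation x < 1 ↔ W.valuation (f x) < 1 := by
  simp [aux_lt, ValuationSubring.mem_comap]

theorem aux_prod {L ι : Type*} [Field L] (W : ValuationSubring L) (s : Finset ι) (f : ι → L)
    (h : ∀ i ∈ s, W.valuation (f i - 1) < 1) : W.valuation (∏ i ∈ s, f i - 1) < 1 := by
  classical
  induction s using Finset.induction_on with
  | empty => simp
  | insert a s ha ih =>
    rw [Finset.prod_insert ha]
    have h1 := ih fun i hi => h i (Finset.mem_insert_of_mem hi)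
    have h2 := h a (Finset.mem_insert_self _ _)
    set p := ∏ i ∈ s, f i
    have : f a * p - 1 = (f a - 1) * (p - 1) + (f a - 1) + (p - 1) := by ring
    rw [this]
    refine Valuation.map_add_lt _ (Valuation.map_add_lt _ ?_ h2) h1
    rw [map_mul]
    exact mul_lt_one_of_lt_of_le h2 h1.le

theorem aux_prod_lt {L ι : Type*} [Field L] (W : ValuationSubring L) (s : Finset ι) (f : ι → L)
    (h : ∀ i ∈ s, f i ∈ W) (j : ι) (hj : j ∈ s) (h' : W.valuation (f j) < 1) :
    W.valuation (∏ i ∈ s, f i) < 1 := by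
  classical
  rw [← Finset.mul_prod_erase s f hj, map_mul]
  refine mul_lt_one_of_lt_of_le h' ?_
  rw [ValuationSubring.valuation_le_one_iff]
  exact prod_mem fun i hi => h i (Finset.mem_of_mem_erase hi)

/-- A valuation ring is integrally closed, in a concrete form. -/
theorem aux_closed {L : Type*} [Field L] (V : ValuationSubring L) {z : L} (p : Polynomial V)
    (hp : p.Monic) (h : Polynomial.aeval z p = 0) : z ∈ V := by
  have : IsIntegral V z := ⟨p, hp, h⟩
  obtain ⟨y, hy⟩ := IsIntegrallyClosed.isIntegral_iff.1 this
  rw [← hy]; exact y.2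

open Polynomial in
theorem aux_poly {L ι : Type*} [Field L] [Finite ι] (V : ι → ValuationSubring L) (z : L) :
    ∃ Q : ℤ[X], ∀ i, z / aeval z (X * (X - 1) * Q + 1 : ℤ[X]) ∈ V i := by
  classical
  cases nonempty_fintype ι
  have hq : ∀ i, ∃ q : ℤ[X], q.Monic ∧ ((V i).valuation (aeval z q) < 1 ∨
      ∀ p : ℤ[X], p.Monic → ¬ (V i).valuation (aeval z p) < 1) := by
    intro i
    by_cases h : ∃ p : ℤ[X], p.Monic ∧ (V i).valuation (aeval z p) < 1
    · obtain ⟨p, hp, h⟩ := h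
      exact ⟨p, hp, Or.inl h⟩
    · push Not at h
      exact ⟨1, monic_one, Or.inr fun p hp => not_lt.2 (h p hp)⟩
  choose q hqm hq using hq
  set Q := ∏ i, q i with hQ
  have hQm : Q.Monic := monic_prod_of_monic _ _ fun i _ => hqm i
  have hX1 : (X - 1 : ℤ[X]).Monic := by simpa using monic_X_sub_C (1 : ℤ)
  have hX1d : (X - 1 : ℤ[X]).natDegree = 1 := by simpa using natDegree_X_sub_C (1 : ℤ)
  have hm0 : (X * (X - 1) * Q : ℤ[X]).Monic := (monic_X.mul hX1).mul hQm
  have hd0 : 2 ≤ (X * (X - 1) * Q : ℤ[X]).natDegree := by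
    rw [(monic_X.mul hX1).natDegree_mul hQm, monic_X.natDegree_mul hX1, natDegree_X, hX1d]
    omega
  have hdlt : (1 : ℤ[X]).natDegree < (X * (X - 1) * Q : ℤ[X]).natDegree := by
    rw [natDegree_one]; omega
  have hm : (X * (X - 1) * Q + 1 : ℤ[X]).Monic :=
    hm0.add_of_left (degree_lt_degree hdlt)
  have hd : 2 ≤ (X * (X - 1) * Q + 1 : ℤ[X]).natDegree := by
    rwa [natDegree_add_eq_left_of_natDegree_lt hdlt]
  refine ⟨Q, fun i => ?_⟩
  by_cases hz : z ∈ V i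
  · have hle : (V i).valuation (aeval z (X * (X - 1) * Q + 1 : ℤ[X])) ≤ 1 :=
      ((V i).valuation_le_one_iff _).2 (aux_int _ hz _)
    have hge : ¬ (V i).valuation (aeval z (X * (X - 1) * Q + 1 : ℤ[X])) < 1 := by
      rcases hq i with h | h
      · intro hlt
        have h1 : (V i).valuation (aeval z (X * (X - 1) * Q : ℤ[X])) < 1 := by
          rw [hQ, ← Finset.mul_prod_erase Finset.univ q (Finset.mem_univ i),
            mul_left_comm, map_mul, map_mul]
          exact mul_lt_one_of_lt_of_le h (((V i).valuation_le_one_iff _).2 (aux_int _ hz _))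
        have := Valuation.map_sub_lt _ hlt h1
        simp at this
      · exact h _ hm
    have h1 := le_antisymm hle (not_lt.1 hge)
    rw [← ValuationSubring.valuation_le_one_iff, map_div₀, h1, div_one]
    exact ((V i).valuation_le_one_iff _).2 hz
  · by_contra hu
    set G := (X * (X - 1) * Q + 1 : ℤ[X]) with hG
    have hz0 : z ≠ 0 := by rintro rfl; exact hz (zero_mem _)
    have hc : (z / aeval z G)⁻¹ ∈ V i := ((V i).mem_or_inv_mem _).resolve_left hu
    rw [inv_div] at hc
    apply hz
    refine aux_closed (V i) (G.map (Int.castRingHom _) - C ⟨_, hc⟩ * X) ?_ ?_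
    · refine (hm.map _).sub_of_left ?_
      refine lt_of_le_of_lt (degree_C_mul_X_le _) ?_
      rw [degree_eq_natDegree (hm.map _).ne_zero, hm.natDegree_map]
      exact_mod_cast hd
    · rw [map_sub, map_mul, aeval_X, aeval_C]
      have e : aeval z (G.map (Int.castRingHom (V i))) = aeval z G := by
        rw [aeval_def, aeval_def, eval₂_map]
        congr 1
      rw [e]
      change aeval z G - aeval z G / z * z = 0
      field_simp
      simp

theorem aux_sep {L : Type*} [Field L] (W V : ValuationSubring L) (h1 : ¬ W ≤ V) (h2 : ¬ V ≤ W) :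
    ∃ z : L, W.valuation (z - 1) < 1 ∧ V.valuation z < 1 := by
  obtain ⟨a, haW, haV⟩ := SetLike.not_le_iff_exists.1 h1
  obtain ⟨b, hbV, hbW⟩ := SetLike.not_le_iff_exists.1 h2
  have ha0 : a ≠ 0 := by rintro rfl; exact haV (zero_mem _)
  have hb0 : b ≠ 0 := by rintro rfl; exact hbW (zero_mem _)
  have hWa := (W.valuation_le_one_iff _).2 haW
  have hVb := (V.valuation_le_one_iff _).2 hbV
  rw [← ValuationSubring.valuation_le_one_iff, not_le] at haV hbW
  have hW : W.valuation a < W.valuation b := lt_of_le_of_lt hWa hbW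
  have hV : V.valuation b < V.valuation a := lt_of_le_of_lt hVb haV
  have eW := Valuation.map_add_eq_of_lt_left _ hW
  have eV := Valuation.map_add_eq_of_lt_right _ hV
  rw [add_comm] at eW eV
  have hab : a + b ≠ 0 := by
    intro h
    rw [h, map_zero] at eW
    rw [← eW] at hbW
    simp at hbW
  refine ⟨b / (a + b), ?_, ?_⟩
  · have : b / (a + b) - 1 = - a / (a + b) := by field_simp; ring
    rw [this, map_div₀, Valuation.map_neg, eW]
    exact (div_lt_one₀ (lt_of_le_of_lt zero_le' hW)).2 hW
  · rw [map_div₀, eV]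
    exact (div_lt_one₀ (lt_of_le_of_lt zero_le' hV)).2 hV

open Polynomial in
theorem aux_approx {L ι : Type*} [Field L] [Finite ι] (W : ValuationSubring L)
    (V : ι → ValuationSubring L) (h1 : ∀ i, ¬ W ≤ V i) (h2 : ∀ i, ¬ V i ≤ W) :
    ∃ x : L, W.valuation (x - 1) < 1 ∧ ∀ i, (V i).valuation x < 1 := by
  classical
  cases nonempty_fintype ι
  have key : ∀ j, ∃ z : L, W.valuation (z - 1) < 1 ∧ (V j).valuation z < 1 ∧ ∀ i, z ∈ V i := by
    intro j
    obtain ⟨z, hzW, hzV⟩ := aux_sep W (V j) (h1 j) (h2 j)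
    obtain ⟨Q, hQ⟩ := aux_poly V z
    refine ⟨_, ?_, ?_, hQ⟩
    · have hz : z ∈ W := by
        have : z - 1 ∈ W := (W.valuation_le_one_iff _).1 hzW.le
        simpa using add_mem this (one_mem W)
      have hs : W.valuation (aeval z (X * (X - 1) * Q : ℤ[X])) < 1 := by
        have e : (X * (X - 1) * Q : ℤ[X]) = (X - 1) * (X * Q) := by ring
        rw [e, map_mul, map_mul]
        refine mul_lt_one_of_lt_of_le ?_ ((W.valuation_le_one_iff _).2 (aux_int _ hz _))
        simpa using hzW
      rw [map_add, map_one]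
      set s := aeval z (X * (X - 1) * Q : ℤ[X])
      have hv : W.valuation (s + 1) = 1 := by
        rw [Valuation.map_add_eq_of_lt_right _ (by rw [map_one]; exact hs), map_one]
      have hs1 : s + 1 ≠ 0 := by
        intro h; rw [h, map_zero] at hv; exact zero_ne_one hv
      have e : z / (s + 1) - 1 = ((z - 1) - s) / (s + 1) := by field_simp; ring
      rw [e, map_div₀, hv, div_one]
      exact Valuation.map_sub_lt _ hzW hs
    · have hz : z ∈ V j := ((V j).valuation_le_one_iff _).1 hzV.le
      have hs : (V j).valuation (aeval z (X * (X - 1) * Q : ℤ[X])) < 1 := by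
        rw [mul_assoc, map_mul, map_mul]
        refine mul_lt_one_of_lt_of_le ?_ (((V j).valuation_le_one_iff _).2 (aux_int _ hz _))
        simpa using hzV
      rw [map_add, map_one, map_div₀, Valuation.map_add_eq_of_lt_right _ (by rw [map_one]; exact hs),
        map_one, div_one]
      exact hzV
  choose z hW hV hz using key
  exact ⟨∏ j, z j, aux_prod W _ _ fun j _ => hW j,
    fun i => aux_prod_lt (V i) _ _ (fun j _ => hz j i) i (Finset.mem_univ i) (hV i)⟩

theorem aux_stab {F L : Type*} [Field F] [Field L] [Algebra F L]
    [FiniteDimensional F L] (W : ValuationSubring L) (σ : L ≃ₐ[F] L)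
    (h : ∀ x, x ∈ W → σ x ∈ W) (x : L) : σ x ∈ W → x ∈ W := by
  intro hx
  have hp : ∀ n : ℕ, ∀ y ∈ W, (σ ^ n) y ∈ W := by
    intro n
    induction n with
    | zero => intro y hy; simpa using hy
    | succ n ih => intro y hy; rw [pow_succ']; exact h _ (ih y hy)
  have hfin : IsOfFinOrder σ := isOfFinOrder_of_finite σ
  have hpos := hfin.orderOf_pos
  have := hp (orderOf σ - 1) _ hx
  rw [← AlgEquiv.mul_apply, ← pow_succ, Nat.sub_add_cancel hpos, pow_orderOf_eq_one] at this
  simpa using this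


set_option maxHeartbeats 1000000 in
theorem stmt16 {F L : Type*} [Field F] [Field L] [Algebra F L]
    [FiniteDimensional F L] [IsGalois F L]
    (W : ValuationSubring L)
    (K : IntermediateField F L)
    -- `K` is the decomposition subfield of `L/F` w.r.t. the prolongation `W` of `v`:
    (hK : ∀ σ : L ≃ₐ[F] L, σ ∈ K.fixingSubgroup ↔ (∀ x : L, x ∈ W ↔ σ x ∈ W))
    {r : ℕ} (τ : Fin r → (L ≃ₐ[F] L)) (hr : 0 < r)
    (hτ0 : τ ⟨0, hr⟩ = 1)
    -- the `τ i` represent the cosets of `Gal(L/K)` in `Gal(L/F)`: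
    (hcosets : ∀ σ : L ≃ₐ[F] L, ∃ i : Fin r, (τ i)⁻¹ * σ ∈ K.fixingSubgroup)
    -- the prolongations `w ∘ τ i` of `v` to `L` are pairwise distinct:
    (hdist : ∀ i j : Fin r, i ≠ j →
      W.comap (τ i).toAlgHom.toRingHom ≠ W.comap (τ j).toAlgHom.toRingHom) :
    -- then there is `y ∈ K` with `y ∈ (1 + M_w) ∩ ⋂_{i ≠ 0} M_{w ∘ τ i}`:
    ∃ y : L, y ∈ K ∧ W.valuation (y - 1) < 1 ∧
      ∀ i : Fin r, i ≠ ⟨0, hr⟩ →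
        (W.comap (τ i).toAlgHom.toRingHom).valuation y < 1 := by

  classical
  have hD : ∀ σ : L ≃ₐ[F] L, (∀ x, x ∈ W → σ x ∈ W) → σ ∈ K.fixingSubgroup := fun σ h =>
    (hK σ).2 fun x => ⟨h x, aux_stab W σ h x⟩
  obtain ⟨x, hxW, hxV⟩ := aux_approx W
    (fun σ : {σ : L ≃ₐ[F] L // σ ∉ K.fixingSubgroup} => W.comap σ.1.toAlgHom.toRingHom)
    (fun σ h => σ.2 (hD _ fun x hx => h hx))
    (fun σ h => σ.2 (by
      rw [← inv_mem_iff]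
      refine hD _ fun x hx => h ?_
      change σ.1 (σ.1⁻¹ x) ∈ W
      rwa [← AlgEquiv.mul_apply, mul_inv_cancel, AlgEquiv.one_apply]))
  have hxV' : ∀ σ : L ≃ₐ[F] L, σ ∉ K.fixingSubgroup → W.valuation (σ x) < 1 := fun σ hσ =>
    (aux_comap _ _ _).1 (hxV ⟨σ, hσ⟩)
  have hxD : ∀ σ : L ≃ₐ[F] L, σ ∈ K.fixingSubgroup → W.valuation (σ x - 1) < 1 := by
    intro σ hσ
    rw [aux_lt] at hxW ⊢
    have e : σ x - 1 = σ (x - 1) := by simp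
    rw [e, ← map_inv₀, ← (hK σ).1 hσ]
    rw [map_eq_zero]
    exact hxW
  refine ⟨∏ d : K.fixingSubgroup, (d : L ≃ₐ[F] L) x, ?_, ?_, ?_⟩
  · suffices h : (∏ d : K.fixingSubgroup, (d : L ≃ₐ[F] L) x) ∈
        IntermediateField.fixedField K.fixingSubgroup from
      (IsGalois.fixedField_fixingSubgroup K).le h
    rw [IntermediateField.mem_fixedField_iff]
    intro f hf
    rw [map_prod]
    exact Fintype.prod_equiv (Equiv.mulLeft (⟨f, hf⟩ : K.fixingSubgroup)) _ _ fun d => rfl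
  · exact aux_prod W _ _ fun d _ => hxD d d.2
  · intro i hi
    have hτ : τ i ∉ K.fixingSubgroup := by
      intro h
      apply hdist i _ hi
      ext y
      rw [hτ0]
      exact ((hK _).1 h y).symm
    rw [aux_comap, map_prod]
    have hn : ∀ d : K.fixingSubgroup, W.valuation (τ i ((d : L ≃ₐ[F] L) x)) < 1 := fun d =>
      hxV' (τ i * d) fun h => hτ ((Subgroup.mul_mem_cancel_right _ d.2).1 h)
    exact aux_prod_lt W _ _ (fun d _ => (W.valuation_le_one_iff _).1 (hn d).le) 1
      (Finset.mem_univ _) (hn 1)
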